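/- Let l be a positive odd integer. Then there exists a matrix β with entries β_{i,j} ∈ {0,1} for i,j ∈ {1,…,l} satisfying the column-sum constraint Σ_{i=1}^l β_{i,j} = j for every j and having every row sum Σ_{j=1}^l β_{i,j} equal to (l+1)/2. Such a matrix is given by the cyclic assignment: dimension j uses the channels {(T_{j−1} + t) mod l : 0 ≤ t < j}, where T_j = Σ_{k=1}^j k and channels are identified with residues {0,…,l−1}. -/

import Mathlib

/-!
The cyclic blocks, laid end to end, enumerate the integers `0, 1, …, T - 1` modulo `l`, where `T`
is the total of the block lengths, and no block is long enough to meet a residue twice. Hence a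
row sum counts the `n < T` with `n % l = i`, and this is the same for every channel `i` as soon as
`l ∣ T`. For the lengths `1, …, l` we have `T = l (l + 1) / 2`, a multiple of `l` when `l` is odd.
-/

open Finset

/-- The block of `n` cyclically consecutive channels starting at channel `s % l`, the channels
being the residues `0, …, l - 1`. -/
def cyclicBlock (l s n : ℕ) : Finset ℕ :=
  (range n).image fun t => (s + t) % l

/-- The weight-sharing indicator of the cyclic pattern on `l` channels: column `j ≥ 1` is the
indicator of a block of length `c j`, starting where the block of column `j - 1` ended. The
paper's sub-architecture dimensions are `c j = j`. -/
def cyclicIndicator (l : ℕ) (c : ℕ → ℕ) (i j : ℕ) : ℕ :=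
  if i ∈ cyclicBlock l (∑ k ∈ Icc 1 (j - 1), c k) (c j) then 1 else 0

section CyclicBlock

variable {l n : ℕ} (s : ℕ)

theorem injOn_const_add_mod (h : n ≤ l) : Set.InjOn (fun t => (s + t) % l) (range n) := by
  intro a ha b hb hab
  have ha' : a < n := by simpa using ha
  have hb' : b < n := by simpa using hb
  exact (Nat.ModEq.add_left_cancel' s hab).eq_of_lt_of_lt (ha'.trans_le h) (hb'.trans_le h)

theorem card_cyclicBlock (h : n ≤ l) : #(cyclicBlock l s n) = n := by
  rw [cyclicBlock, card_image_of_injOn (injOn_const_add_mod s h), card_range]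

theorem cyclicBlock_subset_range (h : n ≤ l) : cyclicBlock l s n ⊆ range l := by
  refine image_subset_iff.2 fun t ht => mem_range.2 (Nat.mod_lt _ ?_)
  exact (Nat.zero_le t).trans_lt ((mem_range.1 ht).trans_le h)

theorem ite_mem_cyclicBlock_eq_count (h : n ≤ l) (i : ℕ) :
    (if i ∈ cyclicBlock l s n then 1 else 0) = Nat.count (fun t => (s + t) % l = i) n := by
  calc (if i ∈ cyclicBlock l s n then 1 else 0)
      = ∑ x ∈ cyclicBlock l s n, if x = i then 1 else 0 := (sum_ite_eq' _ i fun _ => 1).symm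
    _ = ∑ t ∈ range n, if (s + t) % l = i then 1 else 0 := sum_image (injOn_const_add_mod s h)
    _ = Nat.count (fun t => (s + t) % l = i) n := by
      rw [Nat.count_eq_card_filter_range, card_filter]

end CyclicBlock

theorem sum_count_consecutive_blocks (p : ℕ → Prop) [DecidablePred p] (c : ℕ → ℕ) (m : ℕ) :
    ∑ j ∈ Icc 1 m, Nat.count (fun t => p (∑ k ∈ Icc 1 (j - 1), c k + t)) (c j) =
      Nat.count p (∑ j ∈ Icc 1 m, c j) := by
  induction m with
  | zero => simp
  | succ m ih =>
    rw [sum_Icc_succ_top (by lia), sum_Icc_succ_top (by lia), ih, Nat.count_add,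
      Nat.add_sub_cancel]

theorem count_mod_eq_of_lt {l i : ℕ} (hi : i < l) (q : ℕ) :
    Nat.count (fun n => n % l = i) (l * q) = q := by
  have hl : 0 < l := Nat.zero_lt_of_lt hi
  simpa [Nat.ModEq, Nat.mod_eq_of_lt hi, hl] using Nat.count_modEq_card (l * q) hl i

theorem sum_Icc_one_id_mul_two (n : ℕ) : (∑ k ∈ Icc 1 n, k) * 2 = n * (n + 1) := by
  have hrange : ∑ k ∈ range (n + 1), k = ∑ k ∈ Icc 1 n, k := by
    rw [sum_range_eq_add_Ico _ n.add_one_pos, zero_add, Ico_add_one_right_eq_Icc]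
  rw [← hrange, sum_range_id_mul_two, Nat.add_sub_cancel, mul_comm]

theorem sum_Icc_one_id_of_odd {n : ℕ} (hn : Odd n) : ∑ k ∈ Icc 1 n, k = n * ((n + 1) / 2) := by
  refine Nat.eq_of_mul_eq_mul_right two_pos ?_
  rw [sum_Icc_one_id_mul_two, mul_assoc, Nat.div_two_mul_two_of_even hn.add_one]

section CyclicIndicator

variable {l : ℕ} (c : ℕ → ℕ)

theorem cyclicIndicator_eq_zero_or_one (i j : ℕ) :
    cyclicIndicator l c i j = 0 ∨ cyclicIndicator l c i j = 1 :=
  (ite_eq_or_eq _ 1 0).symm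

theorem cyclicIndicator_eq_one_iff {i j : ℕ} :
    cyclicIndicator l c i j = 1 ↔ ∃ t < c j, (∑ k ∈ Icc 1 (j - 1), c k + t) % l = i := by
  simp [cyclicIndicator, cyclicBlock]

theorem sum_cyclicIndicator_column {j : ℕ} (hj : c j ≤ l) :
    ∑ i ∈ range l, cyclicIndicator l c i j = c j := by
  simp only [cyclicIndicator]
  rw [← card_filter, filter_mem_eq_inter, inter_eq_right.2 (cyclicBlock_subset_range _ hj),
    card_cyclicBlock _ hj]

theorem sum_cyclicIndicator_row_eq_count {m : ℕ} (hc : ∀ j ∈ Icc 1 m, c j ≤ l) (i : ℕ) :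
    ∑ j ∈ Icc 1 m, cyclicIndicator l c i j =
      Nat.count (fun n => n % l = i) (∑ j ∈ Icc 1 m, c j) := by
  rw [← sum_count_consecutive_blocks]
  exact sum_congr rfl fun j hj => ite_mem_cyclicBlock_eq_count _ (hc j hj) i

theorem sum_cyclicIndicator_row_of_sum_eq_mul {m i q : ℕ} (hc : ∀ j ∈ Icc 1 m, c j ≤ l)
    (hi : i < l) (hq : ∑ j ∈ Icc 1 m, c j = l * q) :
    ∑ j ∈ Icc 1 m, cyclicIndicator l c i j = q := by
  rw [sum_cyclicIndicator_row_eq_count c hc, hq, count_mod_eq_of_lt hi]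

end CyclicIndicator

/-- For positive odd `l` there is a 0/1 weight-sharing indicator (channels identified with
residues `{0,…,l-1}`, dimensions `j ∈ {1,…,l}`) with column sums `∑_i β i j = j` and every
row sum equal to `(l+1)/2`; it is given by the cyclic assignment in which dimension `j` uses
the channels `{(T_{j-1} + t) mod l : 0 ≤ t < j}` where `T_j = ∑_{k=1}^j k`. -/
theorem cyclic_indicator_of_odd (l : ℕ) (hl : 0 < l) (hodd : Odd l) :
    ∃ β : ℕ → ℕ → ℕ,
      (∀ i ∈ Finset.range l, ∀ j ∈ Finset.Icc 1 l, β i j = 0 ∨ β i j = 1) ∧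
      (∀ j ∈ Finset.Icc 1 l, ∑ i ∈ Finset.range l, β i j = j) ∧
      (∀ i ∈ Finset.range l, ∑ j ∈ Finset.Icc 1 l, β i j = (l + 1) / 2) ∧
      (∀ i ∈ Finset.range l, ∀ j ∈ Finset.Icc 1 l,
        (β i j = 1 ↔ ∃ t < j, ((∑ k ∈ Finset.Icc 1 (j - 1), k) + t) % l = i)) := by
  have hle : ∀ j ∈ Finset.Icc 1 l, id j ≤ l := fun j hj => (Finset.mem_Icc.1 hj).2
  exact ⟨cyclicIndicator l id,
    fun i _ j _ => cyclicIndicator_eq_zero_or_one id i j,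
    fun j hj => sum_cyclicIndicator_column id (hle j hj),
    fun i hi => sum_cyclicIndicator_row_of_sum_eq_mul id hle (Finset.mem_range.1 hi)
      (sum_Icc_one_id_of_odd hodd),
    fun i _ j _ => cyclicIndicator_eq_one_iff id⟩
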